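/- arXiv:2307.13744 — 6 statements merged into one kernel-verified Lean document; each statement's English description precedes it below -/
import Mathlib

section
/- Let L(θ) = L_0 + g_0ᵀ(θ−θ_0) + (1/2)(θ−θ_0)ᵀB(θ−θ_0) be a quadratic function on ℝ^d with B a symmetric d×d real matrix, so that its gradient is g(θ) = g_0 + B(θ−θ_0). Let (θ_t)_{t≥0} be any sequence of points, let g_t = g(θ_t), and let β ∈ [0,1). Define the momentum sequences Mθ_0 = θ_0, Mg_0 = g_0, Mθ_t = β·Mθ_{t−1} + (1−β)·θ_t, and Mg_t = β·Mg_{t−1} + (1−β)·g_t. Then for every integer T ≥ 1 and every k ≥ 0, the pairs s_k = Mθ_{(k+1)T} − Mθ_{kT} and y_k = Mg_{(k+1)T} − Mg_{kT} satisfy the exact secant relation y_k = B·s_k; i.e., in the noise-free case the momentum-based scheme produces the same secant pairs relation (and hence the same Hessian approximation) as vanilla L-BFGS. -/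
/-!
An affine map commutes with combinations whose coefficients `β` and `1 - β` sum to one, so it
carries the momentum of the iterates to the momentum of the gradients. Thus `Mg t` is the gradient
at `Mθ t`, and differences of values of an affine map are given by its linear part, the Hessian.
-/

/-- `M` is the momentum sequence (exponential moving average) of `v` with coefficient `β`. It is a
predicate on `M`, so that a sequence given by its recurrence can be used as it stands. -/
structure IsMomentum {R E : Type*} [Ring R] [AddCommGroup E] [Module R E]
    (β : R) (v M : ℕ → E) : Prop where
  zero : M 0 = v 0
  succ : ∀ t, M (t + 1) = β • M t + (1 - β) • v (t + 1)

section

variable {R E F : Type*} [Ring R] [AddCommGroup E] [Module R E] [AddCommGroup F] [Module R F]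
  {β : R}

namespace IsMomentum

theorem unique {v M M' : ℕ → E} (hM : IsMomentum β v M) (hM' : IsMomentum β v M') : M = M' := by
  funext t
  induction t with
  | zero => rw [hM.zero, hM'.zero]
  | succ t ih => rw [hM.succ, hM'.succ, ih]

theorem map_affineMap {v M : ℕ → E} (hM : IsMomentum β v M) (f : E →ᵃ[R] F) :
    IsMomentum β (f ∘ v) (f ∘ M) where
  zero := congrArg f hM.zero
  succ t := (congrArg f (hM.succ t)).trans (Convex.combo_affine_apply (add_sub_cancel _ _))

end IsMomentum

theorem momentum_secant_pairs_exact_general (g : E →ᵃ[R] F) {θ Mθ : ℕ → E} {Mg : ℕ → F}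
    (hMθ : IsMomentum β θ Mθ) (hMg : IsMomentum β (g ∘ θ) Mg) (m n : ℕ) :
    Mg n - Mg m = g.linear (Mθ n - Mθ m) := by
  obtain rfl : Mg = g ∘ Mθ := hMg.unique (hMθ.map_affineMap g)
  exact (g.linearMap_vsub (Mθ n) (Mθ m)).symm

end

/-- for a quadratic loss, the momentum-based secant pairs satisfy the exact
secant relation `y_k = B s_k`, just as in vanilla L-BFGS. -/
theorem momentum_secant_pairs_exact
    (d : ℕ) (B : Matrix (Fin d) (Fin d) ℝ) (hB : B.IsSymm)
    (θ0 g0 : Fin d → ℝ)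
    (g : (Fin d → ℝ) → (Fin d → ℝ)) (hg : ∀ x, g x = g0 + B.mulVec (x - θ0))
    (θ : ℕ → Fin d → ℝ) (hθ0 : θ 0 = θ0)
    (β : ℝ) (hβ : β ∈ Set.Ico (0 : ℝ) 1)
    (Mθ Mg : ℕ → Fin d → ℝ)
    (hMθ0 : Mθ 0 = θ 0) (hMg0 : Mg 0 = g (θ 0))
    (hMθ : ∀ t : ℕ, Mθ (t + 1) = β • Mθ t + (1 - β) • θ (t + 1))
    (hMg : ∀ t : ℕ, Mg (t + 1) = β • Mg t + (1 - β) • g (θ (t + 1)))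
    (T : ℕ) (hT : 1 ≤ T) (k : ℕ) :
    Mg ((k + 1) * T) - Mg (k * T) = B.mulVec (Mθ ((k + 1) * T) - Mθ (k * T)) := by
  let gradient := AffineMap.mk' g B.mulVecLin θ0 fun x ↦ by simp [hg, add_comm]
  exact momentum_secant_pairs_exact_general gradient ⟨hMθ0, hMθ⟩ ⟨hMg0, hMg⟩ _ _
end

section
/- Let B be a symmetric d×d real matrix with λI ⪯ B ⪯ ΛI where Λ ≥ λ > 0, and let L(θ) = (1/2)(θ−θ*)ᵀB(θ−θ*) be the quadratic loss with minimum value 0 at θ*. Fix ε > 0 and α > 2. Suppose θ_t ∈ ℝ^d with s = θ* − θ_t ≠ 0, and suppose the noisy gradient change y satisfies ‖y − B·s‖ ≤ 2ε (noise bound) and the curvature condition ⟨s, y⟩ ≥ α·ε·‖s‖. Then L(θ_t) ≥ ((α−2)²·λ / (2Λ²))·ε². In other words, the achievable loss of noisy L-BFGS is lower bounded by a value proportional to the noise level ε². -/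
open RealInnerProductSpace

/-!
By Cauchy–Schwarz the noise changes `⟪s, B s⟫` by at most `2 ε ‖s‖`, so the curvature condition
gives `(α - 2) ε ‖s‖ ≤ ⟪s, B s⟫`. Comparing with `⟪s, B s⟫ ≤ Λ ‖s‖²` forces `(α - 2) ε ≤ Λ ‖s‖`:
the iterate cannot be too close to the minimizer. Together the two inequalities give
`((α - 2) ε)² / Λ ≤ ⟪s, B s⟫`, and the constant of the theorem is smaller by the factor `λ / Λ ≤ 1`.
-/

section InnerProductSpace

variable {E : Type*} [NormedAddCommGroup E] [InnerProductSpace ℝ E]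

lemma sub_mul_norm_le_inner_of_norm_sub_le {s y z : E} {c δ : ℝ}
    (hyz : ‖y - z‖ ≤ δ) (hy : c * ‖s‖ ≤ ⟪s, y⟫) : (c - δ) * ‖s‖ ≤ ⟪s, z⟫ := by
  have hdiff : ⟪s, y⟫ - ⟪s, z⟫ ≤ δ * ‖s‖ := calc
    ⟪s, y⟫ - ⟪s, z⟫ = ⟪s, y - z⟫ := (inner_sub_right s y z).symm
    _ ≤ ‖s‖ * ‖y - z‖ := real_inner_le_norm s (y - z)
    _ ≤ ‖s‖ * δ := by gcongr
    _ = δ * ‖s‖ := mul_comm _ _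
  linarith

lemma sq_div_le_inner_of_mul_norm_le_inner {s z : E} {a L : ℝ} (ha : 0 ≤ a) (hL : 0 < L)
    (hs : s ≠ 0) (hlow : a * ‖s‖ ≤ ⟪s, z⟫) (hup : ⟪s, z⟫ ≤ L * ‖s‖ ^ 2) :
    a ^ 2 / L ≤ ⟪s, z⟫ := by
  have hnorm : a / L ≤ ‖s‖ := by
    rw [div_le_iff₀' hL]
    refine le_of_mul_le_mul_right ?_ (norm_pos_iff.mpr hs)
    calc a * ‖s‖ ≤ L * ‖s‖ ^ 2 := hlow.trans hup
      _ = L * ‖s‖ * ‖s‖ := by ring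
  calc a ^ 2 / L = a * (a / L) := by ring
    _ ≤ a * ‖s‖ := by gcongr
    _ ≤ ⟪s, z⟫ := hlow

theorem noisy_lbfgs_loss_lower_bound_general (T : E →ₗ[ℝ] E) {Lam : ℝ} (hLam : 0 < Lam)
    (hup : ∀ x : E, ⟪x, T x⟫ ≤ Lam * ‖x‖ ^ 2) {θstar θt y : E} (hθ : θstar ≠ θt)
    {ε α : ℝ} (hα : 2 ≤ α) (hnoise : ‖y - T (θstar - θt)‖ ≤ 2 * ε)
    (hcurv : α * ε * ‖θstar - θt‖ ≤ ⟪θstar - θt, y⟫) :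
    (α - 2) ^ 2 / (2 * Lam) * ε ^ 2 ≤ (1 / 2) * ⟪θt - θstar, T (θt - θstar)⟫ := by
  have hε : 0 ≤ ε := by linarith [(norm_nonneg _).trans hnoise]
  have hgap : 0 ≤ α * ε - 2 * ε := by nlinarith
  have hcurvT := sub_mul_norm_le_inner_of_norm_sub_le hnoise hcurv
  have hform := sq_div_le_inner_of_mul_norm_le_inner hgap hLam (sub_ne_zero.mpr hθ) hcurvT (hup _)
  calc (α - 2) ^ 2 / (2 * Lam) * ε ^ 2 = (1 / 2) * ((α * ε - 2 * ε) ^ 2 / Lam) := by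
        field_simp
    _ ≤ (1 / 2) * ⟪θstar - θt, T (θstar - θt)⟫ := by gcongr
    _ = (1 / 2) * ⟪θt - θstar, T (θt - θstar)⟫ := by
        rw [← neg_sub θt θstar, map_neg, inner_neg_neg]

end InnerProductSpace

lemma mul_div_two_mul_sq_le_div_two_mul {a l L : ℝ} (ha : 0 ≤ a) (hL : 0 < L) (hl : l ≤ L) :
    a * l / (2 * L ^ 2) ≤ a / (2 * L) := calc
  a * l / (2 * L ^ 2) ≤ a * L / (2 * L ^ 2) := by gcongr
  _ = a / (2 * L) := by field_simp

/-- lower bound on the achievable loss of noisy L-BFGS on a quadratic. -/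
theorem noisy_lbfgs_loss_lower_bound
    (d : ℕ) (hd : 1 ≤ d) (B : Matrix (Fin d) (Fin d) ℝ) (hB : B.IsSymm)
    (lam Lam : ℝ) (hlam : 0 < lam) (hlamLam : lam ≤ Lam)
    (hlow : ∀ x : EuclideanSpace ℝ (Fin d), lam * ‖x‖ ^ 2 ≤ ⟪x, B.toEuclideanLin x⟫)
    (hup : ∀ x : EuclideanSpace ℝ (Fin d), ⟪x, B.toEuclideanLin x⟫ ≤ Lam * ‖x‖ ^ 2)
    (θstar θt : EuclideanSpace ℝ (Fin d))
    (ε α : ℝ) (hε : 0 < ε) (hα : 2 < α)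
    (s y : EuclideanSpace ℝ (Fin d)) (hs : s = θstar - θt) (hs0 : s ≠ 0)
    (hnoise : ‖y - B.toEuclideanLin s‖ ≤ 2 * ε)
    (hcurv : α * ε * ‖s‖ ≤ ⟪s, y⟫) :
    ((α - 2) ^ 2 * lam / (2 * Lam ^ 2)) * ε ^ 2 ≤
      (1 / 2) * ⟪θt - θstar, B.toEuclideanLin (θt - θstar)⟫ := by
  subst hs
  have hLam : 0 < Lam := hlam.trans_le hlamLam
  have hconst := mul_div_two_mul_sq_le_div_two_mul (sq_nonneg (α - 2)) hLam hlamLam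
  exact (mul_le_mul_of_nonneg_right hconst (sq_nonneg ε)).trans
    (noisy_lbfgs_loss_lower_bound_general _ hLam hup (sub_ne_zero.mp hs0) hα.le hnoise hcurv)
end

section
/- Let s, v, y ∈ ℝ^d with s ≠ 0, let λ > 0, ε > 0, and α > 0. Assume ⟨s, v⟩ ≥ λ‖s‖² (curvature lower bound from λI ⪯ B with v = Bs), ‖y − v‖ ≤ 2ε (noise bound), and ⟨s, y⟩ ≥ α·ε·‖s‖. Then ⟨s, y⟩ / ‖s‖² ≥ (α/(α+2))·λ. -/
open RealInnerProductSpace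

section SeminormedInnerProductSpace

variable {E : Type*} [SeminormedAddCommGroup E] [InnerProductSpace ℝ E]

lemma inner_le_inner_add_norm_mul_norm_sub (s v y : E) :
    ⟪s, v⟫ ≤ ⟪s, y⟫ + ‖s‖ * ‖y - v‖ :=
  calc
    ⟪s, v⟫ = ⟪s, y⟫ + ⟪s, v - y⟫ := by rw [← inner_add_right, add_sub_cancel]
    _ ≤ ⟪s, y⟫ + ‖s‖ * ‖v - y‖ := by gcongr; exact real_inner_le_norm s (v - y)
    _ = ⟪s, y⟫ + ‖s‖ * ‖y - v‖ := by rw [norm_sub_rev]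

variable {s v y : E} {lam ε α κ : ℝ}

/- The Cauchy–Schwarz error `κ * ε * ‖s‖` is absorbed into `⟪s, y⟫` itself: by `hsy`, `α` times the
error is at most `κ * ⟪s, y⟫`. -/
lemma mul_inner_le_add_mul_inner_of_norm_sub_le (hα : 0 ≤ α) (hκ : 0 ≤ κ)
    (hnoise : ‖y - v‖ ≤ κ * ε) (hsy : α * ε * ‖s‖ ≤ ⟪s, y⟫) :
    α * ⟪s, v⟫ ≤ (α + κ) * ⟪s, y⟫ :=
  calc
    α * ⟪s, v⟫ ≤ α * (⟪s, y⟫ + ‖s‖ * ‖y - v‖) := by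
      gcongr
      exact inner_le_inner_add_norm_mul_norm_sub s v y
    _ ≤ α * (⟪s, y⟫ + ‖s‖ * (κ * ε)) := by gcongr
    _ = α * ⟪s, y⟫ + κ * (α * ε * ‖s‖) := by ring
    _ ≤ α * ⟪s, y⟫ + κ * ⟪s, y⟫ := by gcongr
    _ = (α + κ) * ⟪s, y⟫ := by ring

theorem noisy_curvature_lower_bound_general (hs : ‖s‖ ≠ 0) (hα : 0 < α) (hκ : 0 ≤ κ)
    (hcurv : lam * ‖s‖ ^ 2 ≤ ⟪s, v⟫) (hnoise : ‖y - v‖ ≤ κ * ε)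
    (hsy : α * ε * ‖s‖ ≤ ⟪s, y⟫) :
    α / (α + κ) * lam ≤ ⟪s, y⟫ / ‖s‖ ^ 2 := by
  have hακ : 0 < α + κ := by positivity
  have hs_sq : 0 < ‖s‖ ^ 2 := by positivity
  rw [div_mul_eq_mul_div, div_le_div_iff₀ hακ hs_sq]
  calc
    α * lam * ‖s‖ ^ 2 = α * (lam * ‖s‖ ^ 2) := mul_assoc ..
    _ ≤ α * ⟪s, v⟫ := by gcongr
    _ ≤ (α + κ) * ⟪s, y⟫ := mul_inner_le_add_mul_inner_of_norm_sub_le hα.le hκ hnoise hsy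
    _ = ⟪s, y⟫ * (α + κ) := mul_comm ..

end SeminormedInnerProductSpace

/-- lower bound on the estimated curvature along `s` under gradient noise. -/
theorem noisy_curvature_lower_bound
    (d : ℕ) (hd : 1 ≤ d) (s v y : EuclideanSpace ℝ (Fin d)) (hs : s ≠ 0)
    (lam ε α : ℝ) (hlam : 0 < lam) (hε : 0 < ε) (hα : 0 < α)
    (hcurv : lam * ‖s‖ ^ 2 ≤ ⟪s, v⟫)
    (hnoise : ‖y - v‖ ≤ 2 * ε)
    (hsy : α * ε * ‖s‖ ≤ ⟪s, y⟫) :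
    (α / (α + 2)) * lam ≤ ⟪s, y⟫ / ‖s‖ ^ 2 :=
  noisy_curvature_lower_bound_general (norm_ne_zero_iff.mpr hs) hα zero_le_two hcurv hnoise hsy
end

section
/- Let B be a symmetric d×d real matrix with B ⪯ ΛI for some Λ > 0, let s ∈ ℝ^d with s ≠ 0, let ε > 0 and α > 2, and let y ∈ ℝ^d satisfy ‖y − B·s‖ ≤ 2ε and ⟨s, y⟩ ≥ α·ε·‖s‖. Then ‖s‖ ≥ ((α−2)/Λ)·ε. -/
open RealInnerProductSpace

section

variable {E : Type*} [SeminormedAddCommGroup E] [InnerProductSpace ℝ E] {s g y : E}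

theorem real_inner_le_inner_add_norm_mul_norm_sub (s g y : E) :
    ⟪s, y⟫ ≤ ⟪s, g⟫ + ‖s‖ * ‖y - g‖ :=
  calc ⟪s, y⟫ = ⟪s, g⟫ + ⟪s, y - g⟫ := by rw [← inner_add_right, add_sub_cancel]
    _ ≤ ⟪s, g⟫ + ‖s‖ * ‖y - g‖ := by gcongr; exact real_inner_le_norm s (y - g)

theorem sub_le_mul_norm_of_mul_norm_le_inner {c δ Λ : ℝ} (hs : 0 < ‖s‖)
    (hsg : ⟪s, g⟫ ≤ Λ * ‖s‖ ^ 2) (hyg : ‖y - g‖ ≤ δ) (hsy : c * ‖s‖ ≤ ⟪s, y⟫) :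
    c - δ ≤ Λ * ‖s‖ := by
  have hmul : c * ‖s‖ ≤ (Λ * ‖s‖ + δ) * ‖s‖ :=
    calc c * ‖s‖ ≤ ⟪s, y⟫ := hsy
      _ ≤ ⟪s, g⟫ + ‖s‖ * ‖y - g‖ := real_inner_le_inner_add_norm_mul_norm_sub s g y
      _ ≤ Λ * ‖s‖ ^ 2 + ‖s‖ * δ := by gcongr
      _ = (Λ * ‖s‖ + δ) * ‖s‖ := by ring
  exact sub_le_iff_le_add.mpr (le_of_mul_le_mul_right hmul hs)

/-- `g` plays the role of the noise-free gradient change `B s`. -/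
theorem noisy_lbfgs_step_norm_lower_bound_general {Λ ε α : ℝ} (hΛ : 0 < Λ) (hs : 0 < ‖s‖)
    (hcurv : ⟪s, g⟫ ≤ Λ * ‖s‖ ^ 2) (hnoise : ‖y - g‖ ≤ 2 * ε)
    (hsy : α * ε * ‖s‖ ≤ ⟪s, y⟫) :
    ((α - 2) / Λ) * ε ≤ ‖s‖ := by
  rw [div_mul_eq_mul_div, div_le_iff₀' hΛ, sub_mul]
  exact sub_le_mul_norm_of_mul_norm_le_inner hs hcurv hnoise hsy

end

/-- lower bound on the step norm `‖s‖` under the curvature-pair selection rule. -/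
theorem noisy_lbfgs_step_norm_lower_bound
    (d : ℕ) (hd : 1 ≤ d) (B : Matrix (Fin d) (Fin d) ℝ) (hB : B.IsSymm)
    (Lam : ℝ) (hLam : 0 < Lam)
    (hup : ∀ x : EuclideanSpace ℝ (Fin d), ⟪x, B.toEuclideanLin x⟫ ≤ Lam * ‖x‖ ^ 2)
    (s y : EuclideanSpace ℝ (Fin d)) (hs : s ≠ 0)
    (ε α : ℝ) (hε : 0 < ε) (hα : 2 < α)
    (hnoise : ‖y - B.toEuclideanLin s‖ ≤ 2 * ε)
    (hsy : α * ε * ‖s‖ ≤ ⟪s, y⟫) :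
    ((α - 2) / Lam) * ε ≤ ‖s‖ :=
  noisy_lbfgs_step_norm_lower_bound_general hLam (norm_pos_iff.mpr hs) (hup s) hnoise hsy
end

section
/- Let B be a symmetric d×d real matrix with λI ⪯ B ⪯ ΛI where Λ ≥ λ > 0, let s ∈ ℝ^d with s ≠ 0, let ε > 0 and α > 2, and let y ∈ ℝ^d satisfy ‖y − B·s‖ ≤ 2ε and ⟨s, y⟩ ≥ α·ε·‖s‖. Then ‖y‖² / ‖s‖² ≤ ((α/(α−2))·Λ)², i.e., ‖y‖ ≤ (α/(α−2))·Λ·‖s‖. -/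
open RealInnerProductSpace

/-!
Since `B` is symmetric, its operator norm is the supremum of `|⟪x, B x⟫| / ‖x‖ ^ 2`, so
`‖B s‖ ≤ Λ ‖s‖`. By Cauchy–Schwarz the curvature condition forces `α ε ≤ ‖y‖`: the noise, of norm at
most `2 ε`, is at most the fraction `2 / α < 1` of the signal `y`. Hence `(1 - 2 / α) ‖y‖ ≤ ‖B s‖`.
-/

section NoisySecantPair

open scoped InnerProductSpace

theorem norm_le_div_mul_norm_of_norm_sub_le {E : Type*} [SeminormedAddCommGroup E] {y g : E}
    {ε α β : ℝ} (hβ : 0 ≤ β) (hβα : β < α) (hnoise : ‖y - g‖ ≤ β * ε) (hsignal : α * ε ≤ ‖y‖) :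
    ‖y‖ ≤ α / (α - β) * ‖g‖ := by
  have hα : 0 ≤ α := hβ.trans hβα.le
  have hnorm_sub : ‖y‖ - ‖g‖ ≤ β * ε := (norm_sub_norm_le y g).trans hnoise
  have hrelative : α * (‖y‖ - ‖g‖) ≤ β * ‖y‖ :=
    calc α * (‖y‖ - ‖g‖) ≤ α * (β * ε) := mul_le_mul_of_nonneg_left hnorm_sub hα
      _ = β * (α * ε) := mul_left_comm α β ε
      _ ≤ β * ‖y‖ := mul_le_mul_of_nonneg_left hsignal hβ
  rw [div_mul_eq_mul_div, le_div_iff₀ (sub_pos.2 hβα)]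
  linarith

variable {𝕜 E : Type*} [RCLike 𝕜] [NormedAddCommGroup E] [InnerProductSpace 𝕜 E]

theorem le_norm_of_mul_norm_le_re_inner {s y : E} {c : ℝ} (hs : s ≠ 0)
    (h : c * ‖s‖ ≤ RCLike.re ⟪s, y⟫_𝕜) : c ≤ ‖y‖ := by
  refine le_of_mul_le_mul_right ?_ (norm_pos_iff.2 hs)
  calc c * ‖s‖ ≤ RCLike.re ⟪s, y⟫_𝕜 := h
    _ ≤ ‖s‖ * ‖y‖ := re_inner_le_norm s y
    _ = ‖y‖ * ‖s‖ := mul_comm _ _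

theorem opNorm_le_of_abs_re_inner_map_self_le {T : E →L[𝕜] E} (hT : T.IsSymmetric) {C : ℝ}
    (hC : 0 ≤ C) (hbound : ∀ x, |RCLike.re ⟪x, T x⟫_𝕜| ≤ C * ‖x‖ ^ 2) : ‖T‖ ≤ C := by
  rw [T.norm_eq_iSup_rayleighQuotient hT]
  refine ciSup_le fun x ↦ ?_
  rw [abs_div, abs_sq, T.reApplyInnerSelf_apply, inner_re_symm]
  exact div_le_of_le_mul₀ (sq_nonneg _) hC (hbound x)

theorem noisy_lbfgs_curvature_ratio_upper_bound_general {T : E →L[𝕜] E} (hT : T.IsSymmetric)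
    {Lam : ℝ} (hbound : ∀ x, |RCLike.re ⟪x, T x⟫_𝕜| ≤ Lam * ‖x‖ ^ 2) {s y : E} (hs : s ≠ 0)
    {ε α : ℝ} (hα : 2 < α) (hnoise : ‖y - T s‖ ≤ 2 * ε)
    (hsy : α * ε * ‖s‖ ≤ RCLike.re ⟪s, y⟫_𝕜) :
    ‖y‖ ^ 2 / ‖s‖ ^ 2 ≤ ((α / (α - 2)) * Lam) ^ 2 ∧ ‖y‖ ≤ (α / (α - 2)) * Lam * ‖s‖ := by
  have hs_pos : 0 < ‖s‖ := norm_pos_iff.2 hs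
  have hLam : 0 ≤ Lam :=
    nonneg_of_mul_nonneg_left ((abs_nonneg _).trans (hbound s)) (pow_pos hs_pos 2)
  have hTs : ‖T s‖ ≤ Lam * ‖s‖ :=
    T.le_of_opNorm_le (opNorm_le_of_abs_re_inner_map_self_le hT hLam hbound) s
  have hratio : 0 ≤ α / (α - 2) := div_nonneg (by linarith) (by linarith)
  have hy : ‖y‖ ≤ (α / (α - 2)) * Lam * ‖s‖ :=
    calc ‖y‖ ≤ α / (α - 2) * ‖T s‖ :=
          norm_le_div_mul_norm_of_norm_sub_le zero_le_two hα hnoise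
            (le_norm_of_mul_norm_le_re_inner hs hsy)
      _ ≤ α / (α - 2) * (Lam * ‖s‖) := mul_le_mul_of_nonneg_left hTs hratio
      _ = α / (α - 2) * Lam * ‖s‖ := (mul_assoc _ _ _).symm
  refine ⟨?_, hy⟩
  rw [div_le_iff₀ (pow_pos hs_pos 2), ← mul_pow]
  exact pow_le_pow_left₀ (norm_nonneg y) hy 2

end NoisySecantPair

/-- upper bound on the curvature ratio `‖y‖²/‖s‖²` of a noisy secant pair. -/
theorem noisy_lbfgs_curvature_ratio_upper_bound
    (d : ℕ) (hd : 1 ≤ d) (B : Matrix (Fin d) (Fin d) ℝ) (hB : B.IsSymm)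
    (lam Lam : ℝ) (hlam : 0 < lam) (hlamLam : lam ≤ Lam)
    (hlow : ∀ x : EuclideanSpace ℝ (Fin d), lam * ‖x‖ ^ 2 ≤ ⟪x, B.toEuclideanLin x⟫)
    (hup : ∀ x : EuclideanSpace ℝ (Fin d), ⟪x, B.toEuclideanLin x⟫ ≤ Lam * ‖x‖ ^ 2)
    (s y : EuclideanSpace ℝ (Fin d)) (hs : s ≠ 0)
    (ε α : ℝ) (hε : 0 < ε) (hα : 2 < α)
    (hnoise : ‖y - B.toEuclideanLin s‖ ≤ 2 * ε)
    (hsy : α * ε * ‖s‖ ≤ ⟪s, y⟫) :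
    ‖y‖ ^ 2 / ‖s‖ ^ 2 ≤ ((α / (α - 2)) * Lam) ^ 2 ∧ ‖y‖ ≤ (α / (α - 2)) * Lam * ‖s‖ := by
  have hbound (x : EuclideanSpace ℝ (Fin d)) : |⟪x, B.toEuclideanLin x⟫| ≤ Lam * ‖x‖ ^ 2 :=
    (abs_of_nonneg (le_trans (by positivity) (hlow x))).trans_le (hup x)
  exact noisy_lbfgs_curvature_ratio_upper_bound_general
    (T := B.toEuclideanLin.toContinuousLinearMap)
    (Matrix.isSymmetric_toEuclideanLin_iff.2 (Matrix.isHermitian_iff_isSymm.2 hB))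
    hbound hs hα hnoise hsy
end

section
/- Let 0 < σ_L < 1 < σ_H, 0 < τ_0 < 1, and let s, y ∈ ℝ^d with s ≠ 0. Set μ = ⟨s, y⟩/⟨s, s⟩ and define the damping factor τ by: τ = min((1−σ_L)/(1−μ), τ_0) if μ ≤ σ_L; τ = min((σ_H−1)/(μ−1), τ_0) if μ ≥ σ_H; and τ = τ_0 otherwise. Define the damped gradient change ŷ = τ·y + (1−τ)·s. Then σ_L ≤ ⟨s, ŷ⟩/⟨s, s⟩ ≤ σ_H; i.e., the damped curvature estimate along s is restrained to the interval [σ_L, σ_H], preserving positive definiteness of the Hessian approximation. -/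
open RealInnerProductSpace

/-!
Damping with factor `τ` replaces the curvature `μ` by the affine combination
`τ μ + (1 - τ) = 1 - τ (1 - μ)`, which moves `μ` towards `1 ∈ [σL, σH]`. If `μ` already lies in
`[σL, σH]`, convexity of the interval suffices. If `μ ≤ σL`, the cap `τ ≤ (1 - σL) / (1 - μ)` says
exactly that the remaining distance `τ (1 - μ)` to `1` is at most `1 - σL`; the case `σH ≤ μ` is
the mirror image.
-/

section Damping

variable {𝕜 : Type*} [Field 𝕜] [LinearOrder 𝕜]

/-- The adaptive damping factor `τ` of mL-BFGS for the raw curvature `μ`, with curvature thresholds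
`σL`, `σH` and default coefficient `τ₀`. For `σL < 1 < σH` neither denominator vanishes in the
branch where it occurs. -/
def dampingFactor (σL σH τ₀ μ : 𝕜) : 𝕜 :=
  if μ ≤ σL then min ((1 - σL) / (1 - μ)) τ₀
  else if σH ≤ μ then min ((σH - 1) / (μ - 1)) τ₀
  else τ₀

variable [IsStrictOrderedRing 𝕜] {σ σL σH τ τ₀ μ : 𝕜}

theorem mul_add_one_sub_mem_Icc_of_lt_one (hμ : μ < 1) (hτ : 0 ≤ τ)
    (hτσ : τ ≤ (1 - σ) / (1 - μ)) : τ * μ + (1 - τ) ∈ Set.Icc σ 1 := by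
  have hgap : 0 < 1 - μ := sub_pos.mpr hμ
  have hlower : τ * (1 - μ) ≤ 1 - σ := (le_div_iff₀ hgap).mp hτσ
  have hupper : 0 ≤ τ * (1 - μ) := mul_nonneg hτ hgap.le
  constructor <;> linarith

theorem mul_add_one_sub_mem_Icc_of_one_lt (hμ : 1 < μ) (hτ : 0 ≤ τ)
    (hτσ : τ ≤ (σ - 1) / (μ - 1)) : τ * μ + (1 - τ) ∈ Set.Icc 1 σ := by
  have hgap : 0 < μ - 1 := sub_pos.mpr hμ
  have hupper : τ * (μ - 1) ≤ σ - 1 := (le_div_iff₀ hgap).mp hτσ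
  have hlower : 0 ≤ τ * (μ - 1) := mul_nonneg hτ hgap.le
  constructor <;> linarith

theorem mul_add_one_sub_mem_Icc_of_mem_Icc (hσL : σL ≤ 1) (hσH : 1 ≤ σH)
    (hμ : μ ∈ Set.Icc σL σH) (hτ₀ : 0 ≤ τ) (hτ₁ : τ ≤ 1) :
    τ * μ + (1 - τ) ∈ Set.Icc σL σH := by
  have hconv := convex_Icc σL σH hμ ⟨hσL, hσH⟩ hτ₀ (sub_nonneg.mpr hτ₁) (add_sub_cancel τ 1)
  simpa only [smul_eq_mul, mul_one] using hconv

theorem dampingFactor_nonneg (hσL : σL ≤ 1) (hσH : 1 ≤ σH) (hτ₀ : 0 ≤ τ₀) :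
    0 ≤ dampingFactor σL σH τ₀ μ := by
  unfold dampingFactor
  split_ifs with hlow hhigh
  · exact le_min (div_nonneg (sub_nonneg.mpr hσL) (sub_nonneg.mpr (hlow.trans hσL))) hτ₀
  · exact le_min (div_nonneg (sub_nonneg.mpr hσH) (sub_nonneg.mpr (hσH.trans hhigh))) hτ₀
  · exact hτ₀

theorem dampingFactor_mul_add_one_sub_mem_Icc (hσL : σL < 1) (hσH : 1 < σH)
    (hτ₀ : 0 ≤ τ₀) (hτ₁ : τ₀ ≤ 1) :
    dampingFactor σL σH τ₀ μ * μ + (1 - dampingFactor σL σH τ₀ μ) ∈ Set.Icc σL σH := by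
  have hnonneg : 0 ≤ dampingFactor σL σH τ₀ μ := dampingFactor_nonneg hσL.le hσH.le hτ₀
  unfold dampingFactor at hnonneg ⊢
  split_ifs at hnonneg ⊢ with hlow hhigh
  · exact Set.Icc_subset_Icc_right hσH.le
      (mul_add_one_sub_mem_Icc_of_lt_one (hlow.trans_lt hσL) hnonneg (min_le_left _ _))
  · exact Set.Icc_subset_Icc_left hσL.le
      (mul_add_one_sub_mem_Icc_of_one_lt (hσH.trans_le hhigh) hnonneg (min_le_left _ _))
  · exact mul_add_one_sub_mem_Icc_of_mem_Icc hσL.le hσH.le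
      ⟨(not_le.mp hlow).le, (not_le.mp hhigh).le⟩ hτ₀ hτ₁

end Damping

section Curvature

variable {E : Type*} [NormedAddCommGroup E] [InnerProductSpace ℝ E] {s : E}

/-- The curvature estimate `sᵀy / sᵀs` along the step `s` given by the gradient change `y`; it has
the junk value `0` at `s = 0`. -/
noncomputable def curvatureRatio (s y : E) : ℝ :=
  ⟪s, y⟫ / ⟪s, s⟫

theorem curvatureRatio_smul_add_smul_self (hs : s ≠ 0) (y : E) (a b : ℝ) :
    curvatureRatio s (a • y + b • s) = a * curvatureRatio s y + b := by
  have hss : ⟪s, s⟫ ≠ 0 := inner_self_ne_zero.mpr hs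
  simp only [curvatureRatio, inner_add_right, real_inner_smul_right]
  field_simp

theorem damped_curvature_bounded_general {σL σH τ₀ : ℝ} (hσL : σL < 1) (hσH : 1 < σH)
    (hτ₀ : 0 ≤ τ₀) (hτ₁ : τ₀ ≤ 1) (hs : s ≠ 0) (y : E) {τ : ℝ}
    (hτ : τ = dampingFactor σL σH τ₀ (curvatureRatio s y)) :
    curvatureRatio s (τ • y + (1 - τ) • s) ∈ Set.Icc σL σH := by
  rw [curvatureRatio_smul_add_smul_self hs, hτ]
  exact dampingFactor_mul_add_one_sub_mem_Icc hσL hσH hτ₀ hτ₁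

end Curvature

/-- adaptive Hessian damping restrains the damped curvature estimate
to the interval `[σ_L, σ_H]`. -/
theorem damped_curvature_bounded
    (d : ℕ) (σL σH τ0 : ℝ) (hσL0 : 0 < σL) (hσL1 : σL < 1) (hσH : 1 < σH)
    (hτ00 : 0 < τ0) (hτ01 : τ0 < 1)
    (s y : EuclideanSpace ℝ (Fin d)) (hs : s ≠ 0)
    (μ τ : ℝ) (hμ : μ = ⟪s, y⟫ / ⟪s, s⟫)
    (hτ : τ = if μ ≤ σL then min ((1 - σL) / (1 - μ)) τ0
              else if σH ≤ μ then min ((σH - 1) / (μ - 1)) τ0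
              else τ0)
    (yhat : EuclideanSpace ℝ (Fin d)) (hyhat : yhat = τ • y + (1 - τ) • s) :
    σL ≤ ⟪s, yhat⟫ / ⟪s, s⟫ ∧ ⟪s, yhat⟫ / ⟪s, s⟫ ≤ σH := by
  subst hμ hyhat
  exact damped_curvature_bounded_general hσL1 hσH hτ00.le hτ01.le hs y hτ
end
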